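/- Let 0 < q < 1, p > 1, α > 0, and set E = (∑_{n=0}^∞ q^{n/p'} (q^{n+1}; q)_{α-1})^p with 1/p + 1/p' = 1. For every sequence (a_n)_{n≥0} of nonnegative reals, ∑_{n=0}^∞ (q^{-n/p'} ∑_{k=n}^∞ (q^{k-n+1}; q)_{α-1} q^{k/p'} a_k)^p ≤ E ∑_{n=0}^∞ a_n^p. -/

import Mathlib

open scoped ENNReal

/-- The infinite q-Pochhammer symbol `(a; q)_∞ = ∏_{i≥0} (1 - a qⁱ)`. -/
noncomputable def qPochInf (a q : ℝ) : ℝ := ∏' i : ℕ, (1 - a * q ^ i)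

/-- The q-Pochhammer symbol `(a; q)_β = (a;q)_∞ / (a q^β; q)_∞`. -/
noncomputable def qPoch (a q β : ℝ) : ℝ := qPochInf a q / qPochInf (a * q ^ β) q


theorem qaux_summable {q a : ℝ} (hq : 0 < q) (hq1 : q < 1) :
    Summable (fun i : ℕ => Real.log (1 - a * q ^ i)) := by
  have h : Summable (fun i : ℕ => -(a * q ^ i)) :=
    ((summable_geometric_of_lt_one hq.le hq1).mul_left a).neg
  have := Real.summable_log_one_add_of_summable h
  simpa [sub_eq_add_neg] using this

theorem qaux_factor {q a : ℝ} (hq : 0 < q) (hq1 : q < 1) (ha : 0 ≤ a) (ha1 : a < 1) (i : ℕ) :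
    0 < 1 - a * q ^ i := by
  have h1 : q ^ i ≤ 1 := pow_le_one₀ hq.le hq1.le
  have h0 : 0 < q ^ i := pow_pos hq i
  nlinarith

theorem qaux_exp {q a : ℝ} (hq : 0 < q) (hq1 : q < 1) (ha : 0 ≤ a) (ha1 : a < 1) :
    qPochInf a q = Real.exp (∑' i : ℕ, Real.log (1 - a * q ^ i)) := by
  rw [qPochInf, Real.rexp_tsum_eq_tprod (qaux_factor hq hq1 ha ha1) (qaux_summable hq hq1)]

theorem qaux_pos {q a : ℝ} (hq : 0 < q) (hq1 : q < 1) (ha : 0 ≤ a) (ha1 : a < 1) :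
    0 < qPochInf a q := by
  rw [qaux_exp hq hq1 ha ha1]; exact Real.exp_pos _

theorem qaux_anti {q a b : ℝ} (hq : 0 < q) (hq1 : q < 1) (ha : 0 ≤ a) (hab : a ≤ b) (hb : b < 1) :
    qPochInf b q ≤ qPochInf a q := by
  rw [qaux_exp hq hq1 ha (hab.trans_lt hb), qaux_exp hq hq1 (ha.trans hab) hb]
  refine Real.exp_le_exp.2 (Summable.tsum_le_tsum (fun i => ?_) (qaux_summable hq hq1)
    (qaux_summable hq hq1))
  refine Real.log_le_log (qaux_factor hq hq1 (ha.trans hab) hb i) ?_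
  have h0 : 0 < q ^ i := pow_pos hq i
  nlinarith

theorem qaux_zero (q : ℝ) : qPochInf 0 q = 1 := by simp [qPochInf]

theorem qaux_poch {q α : ℝ} (hq : 0 < q) (hq1 : q < 1) (hα : 0 < α) (m : ℕ) :
    0 ≤ qPoch (q ^ ((m : ℝ) + 1)) q (α - 1) ∧
      qPoch (q ^ ((m : ℝ) + 1)) q (α - 1) ≤ 1 / qPochInf (q ^ α) q := by
  have e : q ^ ((m : ℝ) + 1) * q ^ (α - 1) = q ^ ((m : ℝ) + α) := by
    rw [← Real.rpow_add hq]; congr 1; ring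
  have hm : (0 : ℝ) ≤ m := m.cast_nonneg
  have n1 : q ^ ((m : ℝ) + 1) < 1 := Real.rpow_lt_one hq.le hq1 (by linarith)
  have n0 : 0 ≤ q ^ ((m : ℝ) + 1) := Real.rpow_nonneg hq.le _
  have d0 : 0 ≤ q ^ ((m : ℝ) + α) := Real.rpow_nonneg hq.le _
  have dα : q ^ ((m : ℝ) + α) ≤ q ^ α :=
    Real.rpow_le_rpow_of_exponent_ge hq hq1.le (by linarith)
  have α1 : q ^ α < 1 := Real.rpow_lt_one hq.le hq1 hα
  have hD := qaux_pos hq hq1 (Real.rpow_nonneg hq.le α) α1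
  have hDm := qaux_anti hq hq1 d0 dα α1
  have hN := qaux_pos hq hq1 n0 n1
  have hN1 : qPochInf (q ^ ((m : ℝ) + 1)) q ≤ 1 := by
    have := qaux_anti hq hq1 le_rfl n0 n1
    rwa [qaux_zero] at this
  rw [qPoch, e]
  exact ⟨div_nonneg hN.le (hD.le.trans hDm), div_le_div₀ zero_le_one hN1 hD hDm⟩

theorem jensen_tsum {p : ℝ} (hp : 1 < p) (w f : ℕ → ℝ≥0∞) :
    (∑' m, w m * f m) ^ p ≤ (∑' m, w m) ^ (p - 1) * ∑' m, w m * f m ^ p := by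
  have hp0 : 0 < p := by linarith
  have key : ∑' m, w m * f m ≤
      (∑' m, w m) ^ (1 - p⁻¹) * (∑' m, w m * f m ^ p) ^ p⁻¹ := by
    rw [ENNReal.tsum_eq_iSup_sum]
    refine iSup_le fun s => (ENNReal.inner_le_weight_mul_Lp_of_nonneg s hp.le w f).trans ?_
    have hi : p⁻¹ ≤ 1 := inv_le_one_of_one_le₀ hp.le
    exact mul_le_mul' (ENNReal.rpow_le_rpow (ENNReal.sum_le_tsum s) (by linarith))
      (ENNReal.rpow_le_rpow (ENNReal.sum_le_tsum s) (by positivity))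
  refine (ENNReal.rpow_le_rpow key hp0.le).trans (le_of_eq ?_)
  rw [ENNReal.mul_rpow_of_nonneg _ _ hp0.le, ← ENNReal.rpow_mul, ← ENNReal.rpow_mul,
    inv_mul_cancel₀ hp0.ne', ENNReal.rpow_one, sub_mul, inv_mul_cancel₀ hp0.ne', one_mul]

theorem young_tsum {p : ℝ} (hp : 1 < p) (w a : ℕ → ℝ≥0∞) :
    ∑' n, (∑' m, w m * a (n + m)) ^ p ≤ (∑' m, w m) ^ p * ∑' n, a n ^ p := by
  calc ∑' n, (∑' m, w m * a (n + m)) ^ p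
      ≤ ∑' n, (∑' m, w m) ^ (p - 1) * ∑' m, w m * a (n + m) ^ p :=
        ENNReal.tsum_le_tsum fun n => jensen_tsum hp w fun m => a (n + m)
    _ = (∑' m, w m) ^ (p - 1) * ∑' m, w m * ∑' n, a (n + m) ^ p := by
        rw [ENNReal.tsum_mul_left, ENNReal.tsum_comm]
        simp_rw [ENNReal.tsum_mul_left]
    _ ≤ (∑' m, w m) ^ (p - 1) * ∑' m, w m * ∑' n, a n ^ p := by
        refine mul_le_mul' le_rfl (ENNReal.tsum_le_tsum fun m => mul_le_mul' le_rfl ?_)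
        exact ENNReal.tsum_comp_le_tsum_of_injective (add_left_injective m) (fun n => a n ^ p)
    _ = (∑' m, w m) ^ p * ∑' n, a n ^ p := by
        rw [ENNReal.tsum_mul_right, ← mul_assoc]
        congr 1
        conv_lhs => rw [← ENNReal.rpow_one (∑' m, w m), ← ENNReal.rpow_mul,
          ← ENNReal.rpow_add_of_nonneg _ _ (by linarith) (by linarith)]
        congr 1; ring

theorem matrix_inequality_N (q p p' α : ℝ) (hq : 0 < q) (hq1 : q < 1) (hp : 1 < p)
    (hα : 0 < α) (hp' : 1 / p + 1 / p' = 1) (a : ℕ → ℝ≥0∞) :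
    ∑' n : ℕ, ((ENNReal.ofReal q) ^ (-(n : ℝ) / p') *
        ∑' m : ℕ, ENNReal.ofReal (qPoch (q ^ ((m : ℝ) + 1)) q (α - 1)) *
          (ENNReal.ofReal q) ^ (((n : ℝ) + (m : ℝ)) / p') * a (n + m)) ^ p
      ≤ ENNReal.ofReal
          ((∑' n : ℕ, q ^ ((n : ℝ) / p') * qPoch (q ^ ((n : ℝ) + 1)) q (α - 1)) ^ p) *
        ∑' n : ℕ, (a n) ^ p := by
  have hp0 : 0 < p := by linarith
  have hpp : 0 < 1 / p' := by
    have : 1 / p < 1 := by rw [div_lt_one hp0]; exact hp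
    linarith
  set t : ℕ → ℝ := fun n => q ^ ((n : ℝ) / p') * qPoch (q ^ ((n : ℝ) + 1)) q (α - 1) with ht
  have t0 : ∀ n, 0 ≤ t n := fun n =>
    mul_nonneg (Real.rpow_nonneg hq.le _) (qaux_poch hq hq1 hα n).1
  have tS : Summable t := by
    have hr : q ^ (1 / p') < 1 := Real.rpow_lt_one hq.le hq1 hpp
    refine Summable.of_nonneg_of_le t0 (fun n => ?_)
      ((summable_geometric_of_lt_one (Real.rpow_nonneg hq.le _) hr).mul_right
        (1 / qPochInf (q ^ α) q))
    have e : q ^ ((n : ℝ) / p') = (q ^ (1 / p')) ^ n := by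
      rw [← Real.rpow_natCast, ← Real.rpow_mul hq.le]; congr 1; ring
    rw [ht, ← e]
    exact mul_le_mul_of_nonneg_left (qaux_poch hq hq1 hα n).2 (Real.rpow_nonneg hq.le _)
  rw [← ENNReal.ofReal_rpow_of_nonneg (tsum_nonneg t0) hp0.le,
    ENNReal.ofReal_tsum_of_nonneg t0 tS]
  refine le_trans (le_of_eq ?_) (young_tsum hp (fun n => ENNReal.ofReal (t n)) a)
  refine tsum_congr fun n => ?_
  congr 1
  rw [← ENNReal.tsum_mul_left]
  refine tsum_congr fun m => ?_
  have hQ0 : ENNReal.ofReal q ≠ 0 := by simpa using hq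
  have e : ENNReal.ofReal q ^ (-(n : ℝ) / p') * ENNReal.ofReal q ^ (((n : ℝ) + (m : ℝ)) / p')
      = ENNReal.ofReal (q ^ ((m : ℝ) / p')) := by
    rw [← ENNReal.rpow_add _ _ hQ0 ENNReal.ofReal_ne_top, ENNReal.ofReal_rpow_of_pos hq]
    congr 2; ring
  rw [ht, ENNReal.ofReal_mul (Real.rpow_nonneg hq.le _), ← e]
  ring
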